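/- arXiv:1409.1395 — 2 statements merged into one kernel-verified Lean document; each statement's English description precedes it below -/
import Mathlib

section
/- A unital C*-algebra A has no characters if and only if there exist an integer n ≥ 1 and elements a₁, …, aₙ, b₁, …, bₙ in A satisfying Σ_{k=1}^n aₖ* aₖ = 1, bⱼ* aⱼ = 0 and bⱼ* bⱼ = aⱼ* aⱼ for all j = 1, …, n. -/
open scoped ComplexStarModule

namespace TwoSidedIdeal

section Ring

variable {R : Type*} [Ring R]

theorem exists_isCoatom_le (I : TwoSidedIdeal R) (hI : (1 : R) ∉ I) :
    ∃ M : TwoSidedIdeal R, IsCoatom M ∧ I ≤ M := by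
  obtain ⟨M, hIM, hM⟩ := zorn_le_nonempty₀ {J : TwoSidedIdeal R | (1 : R) ∉ J} (by
    intro c hc hchain J hJ
    have directed : ∀ {K L : TwoSidedIdeal R}, K ∈ c → L ∈ c → ∃ N ∈ c, K ≤ N ∧ L ≤ N := by
      intro K L hK hL
      rcases hchain.total hK hL with h | h
      exacts [⟨L, hL, h, le_rfl⟩, ⟨K, hK, le_rfl, h⟩]
    refine ⟨.mk' {x | ∃ K ∈ c, x ∈ K} ⟨J, hJ, J.zero_mem⟩ ?_ ?_ ?_ ?_, ?_, ?_⟩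
    · rintro x y ⟨K, hK, hx⟩ ⟨L, hL, hy⟩
      obtain ⟨N, hN, hKN, hLN⟩ := directed hK hL
      exact ⟨N, hN, N.add_mem (hKN hx) (hLN hy)⟩
    · rintro x ⟨K, hK, hx⟩
      exact ⟨K, hK, K.neg_mem hx⟩
    · rintro x y ⟨K, hK, hy⟩
      exact ⟨K, hK, K.mul_mem_left x y hy⟩
    · rintro x y ⟨K, hK, hx⟩
      exact ⟨K, hK, K.mul_mem_right x y hx⟩
    · simp only [Set.mem_ofPred_eq, mem_mk', not_exists, not_and]
      exact fun K hK ↦ hc hK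
    · intro K hK x hx
      rw [mem_mk']
      exact ⟨K, hK, hx⟩) I hI
  refine ⟨M, ⟨?_, fun N hMN ↦ ?_⟩, hIM⟩
  · rintro rfl
    exact hM.prop (mem_top R)
  · by_contra hN
    exact hMN.not_ge (hM.le_of_ge (mt N.one_mem_iff.mp hN) hMN.le)

theorem mem_or_mem_of_isCoatom {M : TwoSidedIdeal R} (hM : IsCoatom M) {a b : R}
    (hab : ∀ x, a * x * b ∈ M) : a ∈ M ∨ b ∈ M := by
  refine or_iff_not_imp_left.mpr fun ha ↦ ?_
  let N : TwoSidedIdeal R := .mk' {c | ∀ x, c * x * b ∈ M}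
    (fun x ↦ by simp [M.zero_mem])
    (fun {x y} hx hy z ↦ by simpa [add_mul] using M.add_mem (hx z) (hy z))
    (fun {x} hx z ↦ by simpa [neg_mul] using M.neg_mem (hx z))
    (fun {x y} hy z ↦ by simpa [mul_assoc] using M.mul_mem_left x _ (hy z))
    (fun {x y} hx z ↦ by simpa [mul_assoc] using hx (y * z))
  have hMN : M < N := by
    refine lt_of_le_of_ne (fun c hc ↦ ?_) ?_
    · rw [mem_mk']
      exact fun x ↦ M.mul_mem_right _ _ (M.mul_mem_right _ _ hc)
    · intro h
      exact ha (h ▸ (mem_mk' _ _ _ _ _ _ a).mpr hab)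
  have h1 : (1 : R) ∈ N := N.one_mem_iff.mpr (hM.2 N hMN)
  simpa using (mem_mk' _ _ _ _ _ _ (1 : R)).mp h1 1

end Ring

theorem isClosed_of_isCoatom {R : Type*} [NormedRing R] [CompleteSpace R] {M : TwoSidedIdeal R}
    (hM : IsCoatom M) : IsClosed (M : Set R) := by
  let N : TwoSidedIdeal R := .mk' (closure (M : Set R))
    (subset_closure M.zero_mem)
    (fun hx hy ↦ map_mem_closure₂ continuous_add hx hy fun _ ha _ hb ↦ M.add_mem ha hb)
    (fun hx ↦ map_mem_closure continuous_neg hx fun _ ha ↦ M.neg_mem ha)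
    (fun {x _} hy ↦ map_mem_closure (continuous_const_mul x) hy
      fun _ ha ↦ M.mul_mem_left _ _ ha)
    (fun {_ y} hx ↦ map_mem_closure (f := (· * y)) (continuous_mul_const y) hx
      fun _ ha ↦ M.mul_mem_right _ _ ha)
  have hNM : (N : Set R) = closure M := coe_mk' _ _ _ _ _ _
  have hN : N ≠ ⊤ := by
    intro h
    have h1 : (1 : R) ∈ closure (M : Set R) := hNM ▸ N.one_mem_iff.mpr h
    have hsub : (M : Set R) ⊆ nonunits R := by
      rintro _ hx ⟨u, rfl⟩
      exact hM.1 (M.one_mem_iff.mp (by simpa using M.mul_mem_left (↑u⁻¹) _ hx))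
    exact closure_minimal hsub nonunits.isClosed h1 isUnit_one
  have hle : M ≤ N := fun x hx ↦ (mem_mk' _ _ _ _ _ _ x).mpr (subset_closure hx)
  rw [(hM.le_iff.mp hle).resolve_left hN] at hNM
  exact closure_eq_iff_isClosed.mp hNM.symm

end TwoSidedIdeal

section CStarAlgebra

variable {A : Type*} [CStarAlgebra A]

theorem continuous_cfc_comp_sub {φ : ℝ → ℝ} (hφ : LipschitzWith 1 φ) (h : A) :
    Continuous fun t : ℝ ↦ cfc (fun x ↦ φ (x - t)) h := by
  have hcont : ∀ t : ℝ, Continuous fun x ↦ φ (x - t) := fun t ↦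
    hφ.continuous.comp (continuous_sub_right t)
  refine LipschitzWith.continuous (K := 1) (LipschitzWith.of_dist_le_mul fun s t ↦ ?_)
  rw [dist_eq_norm, ← cfc_sub _ _ h (hcont s).continuousOn (hcont t).continuousOn]
  refine norm_cfc_le (by positivity) fun x _ ↦ ?_
  have := hφ.dist_le_mul (x - s) (x - t)
  rw [dist_sub_left] at this
  rwa [← dist_eq_norm]

theorem exists_sub_algebraMap_mem_of_isSelfAdjoint {M : TwoSidedIdeal A} (hM : IsCoatom M)
    (hsq : ∀ z : A, z * z = 0 → z ∈ M) {h : A} (hh : IsSelfAdjoint h) :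
    ∃ t : ℝ, h - algebraMap ℝ A t ∈ M := by
  have hclosed := TwoSidedIdeal.isClosed_of_isCoatom hM
  let p : ℝ → A := fun t ↦ cfc (fun x ↦ max (x - t) 0) h
  let q : ℝ → A := fun t ↦ cfc (fun x ↦ max (-(x - t)) 0) h
  have hp : Continuous p := continuous_cfc_comp_sub (LipschitzWith.id.max_const 0) h
  have hq : Continuous q := continuous_cfc_comp_sub (LipschitzWith.id.neg.max_const 0) h
  have hqp (t : ℝ) : q t * p t = 0 := by
    rw [← cfc_mul .., ← cfc_zero ℝ h]
    refine cfc_congr fun x _ ↦ ?_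
    rcases le_total x t with hx | hx <;> simp [hx]
  have hcover (t : ℝ) : p t ∈ M ∨ q t ∈ M :=
    TwoSidedIdeal.mem_or_mem_of_isCoatom hM fun x ↦ hsq _ <| by
      rw [show p t * x * q t * (p t * x * q t) = p t * x * (q t * p t) * (x * q t) by
        simp only [mul_assoc], hqp]
      simp
  have hspec {x : ℝ} (hx : x ∈ spectrum ℝ h) : |x| ≤ ‖h‖ * ‖(1 : A)‖ :=
    spectrum.norm_le_norm_mul_of_mem hx
  have hpM : p (‖h‖ * ‖(1 : A)‖) ∈ M := by
    convert M.zero_mem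
    rw [← cfc_zero ℝ h]
    refine cfc_congr fun x hx ↦ ?_
    simpa using (abs_le.mp (hspec hx)).2
  have hqM : q (-(‖h‖ * ‖(1 : A)‖)) ∈ M := by
    convert M.zero_mem
    rw [← cfc_zero ℝ h]
    refine cfc_congr fun x hx ↦ ?_
    have := (abs_le.mp (hspec hx)).1
    simp only [Pi.zero_apply, sup_eq_right]
    linarith
  obtain ⟨t, -, htp, htq⟩ := isPreconnected_closed_iff.mp (isPreconnected_univ (α := ℝ))
    (p ⁻¹' M) (q ⁻¹' M) (hclosed.preimage hp) (hclosed.preimage hq)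
    (fun t _ ↦ hcover t) ⟨_, trivial, hpM⟩ ⟨_, trivial, hqM⟩
  refine ⟨t, ?_⟩
  have key : h - algebraMap ℝ A t = p t - q t := by
    rw [← cfc_sub .., ← cfc_const t h]
    nth_rw 1 [← cfc_id' ℝ h]
    rw [← cfc_sub ..]
    refine cfc_congr fun x _ ↦ ?_
    rcases le_total x t with hx | hx <;> simp [hx]
  rw [key]
  exact M.sub_mem htp htq

theorem exists_sub_algebraMap_mem {M : TwoSidedIdeal A} (hM : IsCoatom M)
    (hsq : ∀ z : A, z * z = 0 → z ∈ M) (a : A) : ∃ c : ℂ, a - algebraMap ℂ A c ∈ M := by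
  obtain ⟨s, hs⟩ := exists_sub_algebraMap_mem_of_isSelfAdjoint hM hsq (ℜ a).2
  obtain ⟨t, ht⟩ := exists_sub_algebraMap_mem_of_isSelfAdjoint hM hsq (ℑ a).2
  refine ⟨s + Complex.I * t, ?_⟩
  convert M.add_mem hs (M.mul_mem_left (algebraMap ℂ A Complex.I) _ ht) using 1
  nth_rw 1 [← realPart_add_I_smul_imaginaryPart a]
  have hr (r : ℝ) : algebraMap ℂ A r = algebraMap ℝ A r :=
    (IsScalarTower.algebraMap_apply ℝ ℂ A r).symm
  simp only [map_add, map_mul, hr, Algebra.smul_def, mul_sub]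
  abel

theorem nonempty_algHom_of_isCoatom {M : TwoSidedIdeal A} (hM : IsCoatom M)
    (hsq : ∀ z : A, z * z = 0 → z ∈ M) : Nonempty (A →ₐ[ℂ] ℂ) := by
  have h1 : (1 : A) ∉ M := mt M.one_mem_iff.mp hM.1
  have : Nontrivial M.ringCon.Quotient := by
    refine ⟨⟨((1 : A) : M.ringCon.Quotient), ((0 : A) : M.ringCon.Quotient), fun h ↦ h1 ?_⟩⟩
    simpa [TwoSidedIdeal.rel_iff] using M.ringCon.eq.mp h
  have hbij : Function.Bijective (Algebra.ofId ℂ M.ringCon.Quotient) := by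
    refine ⟨(algebraMap ℂ M.ringCon.Quotient).injective, fun x ↦ ?_⟩
    obtain ⟨a, rfl⟩ := Quotient.exists_rep x
    obtain ⟨c, hc⟩ := exists_sub_algebraMap_mem hM hsq a
    exact ⟨c, (M.ringCon.eq.mpr ((M.rel_iff _ _).mpr hc)).symm⟩
  exact ⟨(AlgEquiv.ofBijective _ hbij).symm.toAlgHom.comp (M.ringCon.mkₐ ℂ)⟩

variable (A) in
/-- The cone generated by the elements `star a * a = star b * b` with `star b * a = 0`. -/
def orthogonalPairCone : AddSubmonoid A :=
  AddSubmonoid.closure {x | ∃ a b : A, star b * a = 0 ∧ star b * b = star a * a ∧ star a * a = x}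

theorem star_mul_self_mem_orthogonalPairCone {z : A} (hz : z * z = 0) :
    star z * z ∈ orthogonalPairCone A := by
  let _ := CStarAlgebra.spectralOrder A
  let _ := CStarAlgebra.spectralOrderedRing A
  have hsa : star (CFC.abs z) = CFC.abs z := (CFC.abs_nonneg z).isSelfAdjoint
  refine AddSubmonoid.subset_closure ⟨CFC.abs z, z, ?_, ?_, ?_⟩
  · rw [← CStarRing.mul_star_self_eq_zero_iff]
    calc star z * CFC.abs z * star (star z * CFC.abs z)
        = star z * (CFC.abs z * CFC.abs z) * z := by simp [hsa, mul_assoc]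
      _ = star (z * z) * (z * z) := by rw [CFC.abs_mul_abs]; simp [mul_assoc]
      _ = 0 := by simp [hz]
  · rw [hsa, CFC.abs_mul_abs]
  · rw [hsa, CFC.abs_mul_abs]

theorem star_mul_mul_mem_orthogonalPairCone {x : A} (hx : x ∈ orthogonalPairCone A) (c : A) :
    star c * x * c ∈ orthogonalPairCone A := by
  induction hx using AddSubmonoid.closure_induction with
  | mem x hx =>
    obtain ⟨a, b, hba, hbb, rfl⟩ := hx
    refine AddSubmonoid.subset_closure ⟨a * c, b * c, ?_, ?_, ?_⟩
    · rw [star_mul, mul_assoc, ← mul_assoc _ a, hba]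
      simp
    · simp only [star_mul, mul_assoc]
      rw [← mul_assoc _ b, hbb, mul_assoc]
    · simp only [star_mul, mul_assoc]
  | zero => simp
  | add x y _ _ hx hy => simpa [mul_add, add_mul] using add_mem hx hy

theorem exists_sum_of_mem_orthogonalPairCone {x : A} (hx : x ∈ orthogonalPairCone A) :
    ∃ n : ℕ, 1 ≤ n ∧ ∃ a b : Fin n → A, ∑ k, star (a k) * a k = x ∧
      (∀ j, star (b j) * a j = 0) ∧ ∀ j, star (b j) * b j = star (a j) * a j := by
  induction hx using AddSubmonoid.closure_induction with
  | mem x hx =>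
    obtain ⟨a, b, hba, hbb, rfl⟩ := hx
    exact ⟨1, le_rfl, fun _ ↦ a, fun _ ↦ b, by simp, fun _ ↦ hba, fun _ ↦ hbb⟩
  | zero => exact ⟨1, le_rfl, 0, 0, by simp⟩
  | add x y _ _ hx hy =>
    obtain ⟨m, hm, a, b, rfl, hba, hbb⟩ := hx
    obtain ⟨n, -, c, d, rfl, hdc, hdd⟩ := hy
    refine ⟨m + n, by lia, Fin.append a c, Fin.append b d, ?_, ?_, ?_⟩
    · simp [Fin.sum_univ_add]
    · exact Fin.addCases (by simpa using hba) (by simpa using hdc)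
    · exact Fin.addCases (by simpa using hbb) (by simpa using hdd)

section Order

variable [PartialOrder A] [StarOrderedRing A]

variable (A) in
/-- The two-sided ideal of elements `x` such that `star x * x` is dominated by an element of
`orthogonalPairCone A`. -/
def orthogonalPairIdeal : TwoSidedIdeal A :=
  .mk' {x | ∃ s ∈ orthogonalPairCone A, star x * x ≤ s}
    ⟨0, zero_mem _, by simp⟩
    (by
      rintro x y ⟨s, hs, hxs⟩ ⟨t, ht, hyt⟩
      refine ⟨2 • (s + t), nsmul_mem (add_mem hs ht) 2, ?_⟩
      calc star (x + y) * (x + y)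
          ≤ star (x + y) * (x + y) + star (x - y) * (x - y) :=
            le_add_of_nonneg_right (star_mul_self_nonneg _)
        _ = 2 • (star x * x + star y * y) := by
            simp only [star_add, star_sub, add_mul, sub_mul, mul_add, mul_sub]
            abel
        _ ≤ 2 • (s + t) := nsmul_le_nsmul_right (add_le_add hxs hyt) 2)
    (by
      rintro x ⟨s, hs, hxs⟩
      exact ⟨s, hs, by simpa using hxs⟩)
    (by
      rintro x y ⟨s, hs, hys⟩
      obtain ⟨n, hn⟩ := exists_nat_ge (‖x‖ ^ 2)
      refine ⟨n • s, nsmul_mem hs n, ?_⟩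
      calc star (x * y) * (x * y) = star y * (star x * x) * y := by simp [mul_assoc]
        _ ≤ star y * algebraMap ℝ A (‖x‖ ^ 2) * y :=
            star_left_conjugate_le_conjugate CStarAlgebra.star_mul_le_algebraMap_norm_sq y
        _ ≤ star y * algebraMap ℝ A n * y :=
            star_left_conjugate_le_conjugate (algebraMap_mono A hn) y
        _ = n • (star y * y) := by simp [nsmul_eq_mul, mul_assoc, (Nat.cast_commute n _).eq]
        _ ≤ n • s := nsmul_le_nsmul_right hys n)
    (by
      rintro x y ⟨s, hs, hxs⟩
      refine ⟨star y * s * y, star_mul_mul_mem_orthogonalPairCone hs y, ?_⟩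
      simpa [mul_assoc] using star_left_conjugate_le_conjugate hxs y)

theorem mem_orthogonalPairIdeal {x : A} :
    x ∈ orthogonalPairIdeal A ↔ ∃ s ∈ orthogonalPairCone A, star x * x ≤ s :=
  TwoSidedIdeal.mem_mk' ..

theorem one_mem_orthogonalPairCone (h : (1 : A) ∈ orthogonalPairIdeal A) :
    (1 : A) ∈ orthogonalPairCone A := by
  obtain ⟨s, hs, h1s⟩ := mem_orthogonalPairIdeal.mp h
  have hpos : IsStrictlyPositive s := .of_le isStrictlyPositive_one (by simpa using h1s)
  have hsa : star (s ^ (-(1 / 2) : ℝ)) = s ^ (-(1 / 2) : ℝ) := CFC.rpow_nonneg.isSelfAdjoint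
  have := star_mul_mul_mem_orthogonalPairCone hs (s ^ (-(1 / 2) : ℝ))
  rwa [hsa, CFC.conjugate_rpow_neg_one_half s hpos] at this

end Order

theorem one_mem_orthogonalPairCone_of_isEmpty [IsEmpty (A →ₐ[ℂ] ℂ)] :
    (1 : A) ∈ orthogonalPairCone A := by
  let _ := CStarAlgebra.spectralOrder A
  let _ := CStarAlgebra.spectralOrderedRing A
  by_contra h
  obtain ⟨M, hM, hle⟩ := (orthogonalPairIdeal A).exists_isCoatom_le
    (mt one_mem_orthogonalPairCone h)
  refine (nonempty_algHom_of_isCoatom hM fun z hz ↦ hle ?_).elim isEmptyElim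
  exact mem_orthogonalPairIdeal.mpr ⟨_, star_mul_self_mem_orthogonalPairCone hz, le_rfl⟩

end CStarAlgebra


/-- A unital C*-algebra `A` has no characters (a character being a unital
algebra homomorphism `A → ℂ`) if and only if there exist an integer `n ≥ 1` and elements
`a₁, …, aₙ, b₁, …, bₙ` in `A` satisfying `∑ₖ aₖ* aₖ = 1`, `bⱼ* aⱼ = 0` and
`bⱼ* bⱼ = aⱼ* aⱼ` for all `j = 1, …, n`. -/
theorem no_characters_iff_relations (A : Type*) [CStarAlgebra A] :
    IsEmpty (A →ₐ[ℂ] ℂ) ↔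
      ∃ (n : ℕ), 1 ≤ n ∧ ∃ a b : Fin n → A,
        (∑ k, star (a k) * a k = 1) ∧
        (∀ j, star (b j) * a j = 0) ∧
        (∀ j, star (b j) * b j = star (a j) * a j) := by
  constructor
  · intro _
    exact exists_sum_of_mem_orthogonalPairCone one_mem_orthogonalPairCone_of_isEmpty
  · rintro ⟨n, -, a, b, hsum, hba, hbb⟩
    refine ⟨fun χ ↦ ?_⟩
    have hχ : ∀ j, χ (a j) = 0 := by
      intro j
      have h1 := congrArg χ (hba j)
      have h2 := congrArg χ (hbb j)
      simp only [map_mul, map_star, map_zero, mul_eq_zero, star_eq_zero] at h1 h2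
      rcases h1 with h1 | h1
      · simpa [h1] using h2.symm
      · exact h1
    simpa [hχ] using congrArg χ hsum
end

section
/- Let A and B be unital C*-algebras, let π : A → B be a surjective unital star-algebra homomorphism, let k ≥ 2 be an integer, and let b₀, b₁, …, b_k be positive contractions in B such that b₁, …, b_k are pairwise orthogonal (bᵢbⱼ = 0 for i ≠ j) and pairwise equivalent, b₀ + b₁ + ⋯ + b_k = 1_B, and b₀ = t (b₁ − 1/2)₊ t* for some t ∈ B. Then there exist positive contractions a₀, a₁, …, a_k in A such that a₁, …, a_k are pairwise orthogonal and pairwise equivalent, a₀ ≾ (a₁ − 1/2)₊, and π(aⱼ) = bⱼ for j = 0, 1, …, k. -/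
/-- `a` is Cuntz subequivalent to `b` (`a ≾ b`): there is a sequence `(xₙ)` with
`‖xₙ* b xₙ - a‖ → 0`; equivalently, for each `ε > 0` there is `x` with
`‖x* b x - a‖ < ε`. -/
def CuntzSub {A : Type*} [CStarAlgebra A] (a b : A) : Prop :=
  ∀ ε : ℝ, 0 < ε → ∃ x : A, ‖star x * b * x - a‖ < ε

section CStar

open Filter Topology

variable {A B : Type*} [CStarAlgebra A] [CStarAlgebra B]

theorem mul_eq_zero_of_sq_mul_sq {a b : A} (ha : IsSelfAdjoint a) (hb : IsSelfAdjoint b)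
    (h : a ^ 2 * b ^ 2 = 0) : a * b = 0 := by
  have h1 : a * b ^ 2 = 0 := by
    rw [← CStarRing.star_mul_self_eq_zero_iff, star_mul, star_pow, ha.star_eq, hb.star_eq,
      mul_assoc, ← mul_assoc a, ← sq, h, mul_zero]
  rw [← CStarRing.mul_star_self_eq_zero_iff, star_mul, ha.star_eq, hb.star_eq,
      mul_assoc, ← mul_assoc b, ← mul_assoc, ← sq, h1, zero_mul]

theorem mul_eq_zero_of_pow_two_pow_mul {a b : A} (ha : IsSelfAdjoint a) (hb : IsSelfAdjoint b)
    (l : ℕ) (h : a ^ 2 ^ l * b ^ 2 ^ l = 0) : a * b = 0 := by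
  induction l with
  | zero => simpa using h
  | succ l ih =>
    rw [pow_succ, pow_mul, pow_mul] at h
    exact ih (mul_eq_zero_of_sq_mul_sq (ha.pow _) (hb.pow _) h)

/-- A bounded approximation of the inverse of a positive element `s`. -/
noncomputable def regInv (s : A) (n : ℕ) : A :=
  cfc (fun t : ℝ ↦ (|t| + 1 / ((n : ℝ) + 1))⁻¹) s

theorem continuous_regInv (n : ℕ) : Continuous fun t : ℝ ↦ (|t| + 1 / ((n : ℝ) + 1))⁻¹ := by
  have (t : ℝ) : |t| + 1 / ((n : ℝ) + 1) ≠ 0 := by positivity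
  fun_prop (disch := assumption)

theorem commute_regInv {s c : A} (hc : Commute s c) (n : ℕ) : Commute (regInv s n) c :=
  hc.cfc_real _

theorem one_sub_mul_regInv {s : A} (hs : IsSelfAdjoint s) (n : ℕ) :
    1 - s * regInv s n = cfc (fun t : ℝ ↦ 1 - t * (|t| + 1 / ((n : ℝ) + 1))⁻¹) s := by
  have := continuous_regInv n
  rw [cfc_sub (fun _ : ℝ ↦ 1) (fun t ↦ t * (|t| + 1 / ((n : ℝ) + 1))⁻¹) s,
    cfc_mul (fun t : ℝ ↦ t) (fun t ↦ (|t| + 1 / ((n : ℝ) + 1))⁻¹) s continuousOn_id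
      this.continuousOn, cfc_id' ℝ s,
    cfc_const_one ℝ s, regInv]

theorem norm_mul_eq_norm_mul {P s : A} (hs : IsSelfAdjoint s) (hP : star P * P = s * s) (y : A) :
    ‖P * y‖ = ‖s * y‖ := by
  have h : star (P * y) * (P * y) = star (s * y) * (s * y) := by
    rw [star_mul, star_mul, hs.star_eq, mul_assoc, ← mul_assoc _ P, hP]
    simp only [mul_assoc]
  have h2 := congrArg norm h
  rw [CStarRing.norm_star_mul_self, CStarRing.norm_star_mul_self] at h2
  exact (mul_self_inj (norm_nonneg _) (norm_nonneg _)).mp h2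

theorem mul_star_self_pow_mul (z : A) (e : ℕ) :
    (z * star z) ^ e * z = z * (star z * z) ^ e := by
  induction e with
  | zero => simp
  | succ e ih => rw [pow_succ', mul_assoc, ih, pow_succ']; simp only [mul_assoc]

theorem mul_pow_mul_star (z : A) (e : ℕ) :
    z * (star z * z) ^ e * star z = (z * star z) ^ (e + 1) := by
  rw [← mul_star_self_pow_mul, pow_succ, mul_assoc]

theorem exists_eq_mul_of_chain {P : ℕ → A} (hP : ∀ j, ∃ y, P (j + 1) = y * P j) {i j : ℕ}
    (hij : i ≤ j) : ∃ y, P j = y * P i := by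
  induction j, hij using Nat.le_induction with
  | base => exact ⟨1, (one_mul _).symm⟩
  | succ j hij ih =>
    obtain ⟨y, hy⟩ := ih
    obtain ⟨y', hy'⟩ := hP j
    exact ⟨y' * y, by rw [hy', hy, mul_assoc]⟩

variable [PartialOrder A] [StarOrderedRing A] [PartialOrder B] [StarOrderedRing B]

theorem StarAlgHom.apply_cfc_real (π : A →⋆ₐ[ℂ] B) {f : ℝ → ℝ} (hf : Continuous f) {a : A}
    (ha : IsSelfAdjoint a) : π (cfc f a) = cfc f (π a) :=
  StarAlgHomClass.map_cfc π f a hf.continuousOn (map_continuous π) ha (ha.map π)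

theorem StarAlgHom.apply_nonneg (π : A →⋆ₐ[ℂ] B) {a : A} (ha : 0 ≤ a) : 0 ≤ π a := by
  obtain ⟨y, rfl⟩ := CStarAlgebra.nonneg_iff_eq_star_mul_self.mp ha
  rw [map_mul, map_star]
  exact star_mul_self_nonneg _

theorem StarAlgHom.apply_posPart (π : A →⋆ₐ[ℂ] B) {a : A} (ha : IsSelfAdjoint a) :
    π a⁺ = (π a)⁺ ∧ π a⁻ = (π a)⁻ := by
  have h := CFC.posPart_negPart_unique (a := π a) (b := π a⁺) (c := π a⁻)
    (by rw [← map_sub, CFC.posPart_sub_negPart a]) (by rw [← map_mul]; simp)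
    (π.apply_nonneg (CFC.posPart_nonneg a)) (π.apply_nonneg (CFC.negPart_nonneg a))
  exact ⟨h.1.symm, h.2.symm⟩

theorem StarAlgHom.exists_selfAdjoint_lift (π : A →⋆ₐ[ℂ] B) (hπ : Function.Surjective π) {b : B}
    (hb : IsSelfAdjoint b) : ∃ a : A, IsSelfAdjoint a ∧ π a = b := by
  obtain ⟨a, rfl⟩ := hπ b
  refine ⟨realPart a, (realPart a).2, ?_⟩
  have h : (realPart a : A) + (realPart a : A) = a + star a := by
    rw [realPart_apply_coe, ← two_smul ℝ, smul_smul]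
    norm_num
  have h2 := congrArg π h
  rw [map_add, map_add, map_star, hb.star_eq, ← two_smul ℝ, ← two_smul ℝ (π a)] at h2
  exact smul_right_injective B (two_ne_zero (α := ℝ)) h2

theorem norm_cfc_conjugate_le {f : ℝ → ℝ} (hf : Continuous f) {a : A} (ha : 0 ≤ a) {c : ℝ}
    (hc : 0 ≤ c) (h : ∀ t, 0 ≤ t → ‖f t * t * f t‖ ≤ c) : ‖cfc f a * a * cfc f a‖ ≤ c := by
  have hsa : IsSelfAdjoint a := .of_nonneg ha
  have heq : cfc f a * a * cfc f a = cfc (fun t ↦ f t * t * f t) a := by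
    rw [cfc_mul (fun t ↦ f t * t) f a (by fun_prop) (by fun_prop),
      cfc_mul f (fun t ↦ t) a (by fun_prop) (by fun_prop), cfc_id' ℝ a]
  rw [heq]
  exact norm_cfc_le hc fun t ht ↦ h t (spectrum_nonneg_of_nonneg ha ht)

/-- A positive element whose image is a contraction becomes a contraction after conjugation by a
lift of the unit. -/
theorem StarAlgHom.exists_truncation (π : A →⋆ₐ[ℂ] B) {a : A} (ha : 0 ≤ a) (h : ‖π a‖ ≤ 1) :
    ∃ d : A, IsSelfAdjoint d ∧ π d = 1 ∧ ‖d * a * d‖ ≤ 1 := by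
  have hsa : IsSelfAdjoint a := .of_nonneg ha
  set f : ℝ → ℝ := fun t ↦ (√(max t 1))⁻¹ with hf
  have hpos : ∀ t : ℝ, √(max t 1) ≠ 0 := fun t ↦ by positivity
  have hfc : Continuous f := by fun_prop (disch := assumption)
  refine ⟨cfc f a, cfc_predicate f a, ?_, ?_⟩
  · rw [π.apply_cfc_real hfc hsa, ← cfc_one ℝ (π a) (hsa.map π)]
    refine cfc_congr fun t ht ↦ ?_
    have : t ≤ 1 := by
      rcases subsingleton_or_nontrivial B with hB | hB
      · simp at ht
      exact (le_abs_self t).trans ((spectrum.norm_le_norm_of_mem ht).trans h)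
    simp [hf, this]
  · refine norm_cfc_conjugate_le hfc ha zero_le_one fun t ht ↦ ?_
    have h1 : √(max t 1) * √(max t 1) = max t 1 := Real.mul_self_sqrt (by positivity)
    rw [Real.norm_of_nonneg (by positivity)]
    have h2 : f t * t * f t = t / max t 1 := by
      rw [← h1, hf]; field_simp
    rw [h2]
    exact div_le_one_of_le₀ (le_max_left _ _) (by positivity)

theorem mul_posPart_eq_zero {x h : A} (hh : IsSelfAdjoint h) (hx : x * h = 0) :
    x * h⁺ = 0 ∧ x * h⁻ = 0 := by
  have habs : x * CFC.abs h = 0 := by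
    rw [← CStarRing.mul_star_self_eq_zero_iff, star_mul, (CFC.abs_nonneg h).star_eq,
      mul_assoc, ← mul_assoc (CFC.abs h), CFC.abs_mul_abs, hh.star_eq, mul_assoc, ← mul_assoc, hx,
      zero_mul]
  rw [← CFC.posPart_add_negPart h, mul_add] at habs
  rw [← CFC.posPart_sub_negPart h, mul_sub] at hx
  have h1 := sub_eq_zero.mp hx
  rw [← h1, ← two_smul ℝ] at habs
  have := (smul_eq_zero_iff_right (two_ne_zero (α := ℝ))).mp habs
  exact ⟨this, h1 ▸ this⟩

theorem StarAlgHom.apply_regInv (π : A →⋆ₐ[ℂ] B) {s : A} (hs : IsSelfAdjoint s) (n : ℕ) :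
    π (regInv s n) = regInv (π s) n :=
  π.apply_cfc_real (continuous_regInv n) hs

theorem mul_self_le_norm_smul {s : A} (hs : 0 ≤ s) : s * s ≤ ‖s‖ • s := by
  have hN := IsSelfAdjoint.le_algebraMap_norm_self (a := s) (.of_nonneg hs)
  generalize ‖s‖ = N at *
  obtain ⟨r, hr, rfl⟩ : ∃ r : A, 0 ≤ r ∧ s = r * r :=
    ⟨CFC.sqrt s, CFC.sqrt_nonneg s, (CFC.sqrt_mul_sqrt_self s).symm⟩
  have h := conjugate_le_conjugate_of_nonneg hN hr
  rw [← Algebra.commutes, mul_assoc _ r r, ← Algebra.smul_def] at h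
  simpa only [mul_assoc] using h

theorem norm_regInv_conjugate_le {s : A} (hs : 0 ≤ s) (n : ℕ) :
    ‖(1 - s * regInv s n) * s * (1 - s * regInv s n)‖ ≤ 1 / ((n : ℝ) + 1) := by
  have := continuous_regInv n
  rw [one_sub_mul_regInv (.of_nonneg hs)]
  refine norm_cfc_conjugate_le (by fun_prop) hs (by positivity) fun t ht ↦ ?_
  have hε : (0 : ℝ) < 1 / ((n : ℝ) + 1) := by positivity
  generalize 1 / ((n : ℝ) + 1) = ε at *
  have h1 : 1 - t * (|t| + ε)⁻¹ = ε / (t + ε) := by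
    rw [abs_of_nonneg ht]; field_simp; ring
  rw [h1, Real.norm_of_nonneg (by positivity)]
  have h2 : ε / (t + ε) * t * (ε / (t + ε)) = ε * (ε * t / (t + ε) ^ 2) := by
    field_simp
  rw [h2]
  refine mul_le_of_le_one_right hε.le (div_le_one_of_le₀ ?_ (by positivity))
  nlinarith [mul_nonneg ht hε.le]

theorem tendsto_mul_regInv_mul {s c : A} (hs : 0 ≤ s) {C : ℝ} (hc : c * star c ≤ C • s) :
    Tendsto (fun n ↦ s * regInv s n * c) atTop (𝓝 c) := by
  have hF (n : ℕ) : IsSelfAdjoint (1 - s * regInv s n) := by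
    rw [one_sub_mul_regInv (.of_nonneg hs)]
    exact cfc_predicate _ _
  have hle (n : ℕ) : ‖c - s * regInv s n * c‖ ^ 2 ≤ |C| * (1 / ((n : ℝ) + 1)) := by
    have h1 : c - s * regInv s n * c = (1 - s * regInv s n) * c := by rw [sub_mul, one_mul]
    rw [h1, sq, ← CStarRing.norm_self_mul_star, star_mul, (hF n).star_eq]
    have h2 := (hF n).conjugate_le_conjugate hc
    have h3 := CStarAlgebra.norm_le_norm_of_nonneg_of_le
      ((hF n).conjugate_nonneg (mul_star_self_nonneg c)) h2
    rw [mul_smul_comm, smul_mul_assoc, norm_smul, Real.norm_eq_abs] at h3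
    simp only [mul_assoc] at h3 ⊢
    refine h3.trans (mul_le_mul_of_nonneg_left ?_ (abs_nonneg C))
    simpa only [mul_assoc] using norm_regInv_conjugate_le hs n
  have h0 : Tendsto (fun n : ℕ ↦ |C| * (1 / ((n : ℝ) + 1))) atTop (𝓝 0) := by
    simpa using tendsto_one_div_add_atTop_nhds_zero_nat.const_mul |C|
  have h1 : Tendsto (fun n ↦ ‖c - s * regInv s n * c‖) atTop (𝓝 0) := by
    have := (squeeze_zero (fun n ↦ by positivity) hle h0).sqrt
    simpa using this
  have h2 := (tendsto_zero_iff_norm_tendsto_zero.mpr h1).const_sub c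
  simpa using h2

theorem tendsto_mul_regInv_mul_self {s : A} (hs : 0 ≤ s) :
    Tendsto (fun n ↦ s * regInv s n * s) atTop (𝓝 s) := by
  refine tendsto_mul_regInv_mul hs (C := ‖s‖) ?_
  rw [(IsSelfAdjoint.of_nonneg hs).star_eq]
  exact mul_self_le_norm_smul hs

theorem exists_tendsto_mul_regInv_mul {P s c : A} (hs : 0 ≤ s) (hP : star P * P = s * s) {C : ℝ}
    (hc : c * star c ≤ C • s) :
    ∃ w, Tendsto (fun n ↦ P * regInv s n * c) atTop (𝓝 w) ∧ star w * w = star c * c := by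
  have hsa : IsSelfAdjoint s := .of_nonneg hs
  have ht := tendsto_mul_regInv_mul hs hc
  have hcau : CauchySeq fun n ↦ P * regInv s n * c := by
    rw [Metric.cauchySeq_iff]
    have h := Metric.cauchySeq_iff.mp ht.cauchySeq
    have hd (m n : ℕ) : dist (P * regInv s m * c) (P * regInv s n * c) =
        dist (s * regInv s m * c) (s * regInv s n * c) := by
      simp only [dist_eq_norm, mul_assoc, ← mul_sub]
      exact norm_mul_eq_norm_mul hsa hP _
    simpa only [hd] using h
  obtain ⟨w, hw⟩ := cauchySeq_tendsto_of_complete hcau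
  refine ⟨w, hw, tendsto_nhds_unique (hw.star.mul hw) ?_⟩
  refine (ht.star.mul ht).congr fun n ↦ ?_
  simp only [star_mul, hsa.star_eq, mul_assoc]
  rw [← mul_assoc (star P) P, hP]
  simp only [mul_assoc]

theorem tendsto_mul_regInv_mul_of_commute {P s c y : A} (hs : 0 ≤ s) (hc : Commute s c)
    (h : P * c = y * s * s) : Tendsto (fun n ↦ P * regInv s n * c) atTop (𝓝 (y * s)) := by
  have h1 := (tendsto_mul_regInv_mul_self hs).const_mul y
  refine h1.congr fun n ↦ ?_
  rw [mul_assoc P, (commute_regInv hc n).eq, ← mul_assoc P, h, mul_assoc s,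
    (commute_regInv (Commute.refl s) n).eq]
  simp only [mul_assoc]

theorem exists_sqrt_partial_isometry {x : A} {b : A} (hb : 0 ≤ b) (hx : star x * x = b) :
    ∃ u, star u * u = CFC.sqrt b ∧ (u * star u) ^ 2 = x * star x := by
  set s := CFC.sqrt b
  have hs : 0 ≤ s := CFC.sqrt_nonneg b
  have hsa : IsSelfAdjoint s := .of_nonneg hs
  set c := CFC.sqrt s
  have hcsa : star c = c := (IsSelfAdjoint.of_nonneg (CFC.sqrt_nonneg s)).star_eq
  have hcc : c * c = s := CFC.sqrt_mul_sqrt_self s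
  have hP : star x * x = s * s := hx.trans (CFC.sqrt_mul_sqrt_self b).symm
  obtain ⟨u, hu, huu⟩ := exists_tendsto_mul_regInv_mul hs hP (c := c) (C := 1)
    (by rw [hcsa, hcc, one_smul])
  rw [hcsa, hcc] at huu
  have hux : u * c = x := by
    refine tendsto_nhds_unique (hu.mul_const c) (tendsto_iff_norm_sub_tendsto_zero.mpr ?_)
    have h1 := tendsto_iff_norm_sub_tendsto_zero.mp (tendsto_mul_regInv_mul_self hs)
    refine h1.congr fun n ↦ ?_
    have e1 : x * regInv s n * c * c - x = x * (regInv s n * s - 1) := by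
      rw [mul_assoc _ c c, hcc]; noncomm_ring
    rw [e1, norm_mul_eq_norm_mul hsa hP]
    congr 1
    noncomm_ring
  refine ⟨u, huu, ?_⟩
  rw [← hux, star_mul, hcsa, sq]
  calc u * star u * (u * star u) = u * (star u * u) * star u := by noncomm_ring
    _ = u * c * (c * star u) := by rw [huu, ← hcc]; noncomm_ring

theorem exists_root_partial_isometries {ι : Type*} {x : ι → A} {b : A} (hb : 0 ≤ b)
    (hx : ∀ j, star (x j) * x j = b) (l : ℕ) :
    ∃ (ρ : A) (z : ι → A), 0 ≤ ρ ∧ ρ ^ 2 ^ l = b ∧ (∀ j, star (z j) * z j = ρ) ∧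
      ∀ j, (z j * star (z j)) ^ 2 ^ l = x j * star (x j) := by
  induction l with
  | zero => exact ⟨b, x, hb, by simp, hx, by simp⟩
  | succ l ih =>
    obtain ⟨ρ, z, hρ, hρb, hz, hzx⟩ := ih
    choose u hu huz using fun j ↦ exists_sqrt_partial_isometry hρ (hz j)
    refine ⟨CFC.sqrt ρ, u, CFC.sqrt_nonneg ρ, ?_, hu, fun j ↦ ?_⟩
    · rw [pow_succ', pow_mul, sq, CFC.sqrt_mul_sqrt_self ρ, hρb]
    · rw [pow_succ', pow_mul, huz, hzx]

theorem StarAlgHom.exists_orthogonal_lift_aux (π : A →⋆ₐ[ℂ] B) (hπ : Function.Surjective π)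
    {c : ℕ → B} (hc : ∀ i, 0 ≤ c i) {k : ℕ}
    (hcc : ∀ i < k, ∀ j < k, i ≠ j → c i * c j = 0) (n : ℕ) (hn : n ≤ k) :
    ∃ (a : ℕ → A) (R : A), IsSelfAdjoint R ∧ (∀ i < n, π (a i) = c i ^ (2 ^ (i + 1) - 1)) ∧
      (∀ i < n, ∀ j < n, i ≠ j → star (a i) * a j = 0) ∧ (∀ i < n, star (a i) * R = 0) ∧
      ∀ j < k, n ≤ j → π R * c j = c j ^ 2 ^ n := by
  induction n with
  | zero => exact ⟨0, 1, .one A, by simp, by simp, by simp, by simp⟩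
  | succ n ih =>
    obtain ⟨a, R, hR, ha, hao, haR, hRc⟩ := ih (by lia)
    have hcsa (i : ℕ) : IsSelfAdjoint (c i) := .of_nonneg (hc i)
    have hpow (i : ℕ) (m : ℕ) : 0 ≤ c i ^ m := CStarAlgebra.pow_nonneg (hc i) m
    have hcR (j : ℕ) (hj : j < k) (hnj : n ≤ j) : c j * π R = c j ^ 2 ^ n := by
      have h := congrArg star (hRc j hj hnj)
      rwa [star_mul, star_pow, (hcsa j).star_eq, (hR.map π).star_eq] at h
    have hRcR (j : ℕ) (hj : j < k) (hnj : n ≤ j) :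
        π R * c j * π R = c j ^ (2 ^ (n + 1) - 1) := by
      obtain ⟨m, hm⟩ : ∃ m, 2 ^ n = m + 1 := ⟨2 ^ n - 1, by have := Nat.two_pow_pos n; lia⟩
      rw [hRc j hj hnj, hm, pow_succ, mul_assoc, hcR j hj hnj, ← pow_add]
      congr 1
      rw [pow_succ]; lia
    obtain ⟨L, hL, hπL⟩ := π.exists_selfAdjoint_lift hπ
      (b := c n - ∑ j ∈ Finset.Ico (n + 1) k, c j)
      ((hcsa n).sub (by simp [IsSelfAdjoint, star_sum, (hcsa _).star_eq]))
    set h := R * L * R with hh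
    have hsa : IsSelfAdjoint h := by
      simp [hh, IsSelfAdjoint, hR.star_eq, hL.star_eq, mul_assoc]
    set N := 2 ^ (n + 1) - 1 with hN
    have hN0 : N + 1 = 2 ^ (n + 1) := by have := Nat.two_pow_pos (n + 1); lia
    have hN1 : N ≠ 0 := by
      have : 2 ^ (n + 1) = 2 * 2 ^ n := by ring
      have := Nat.two_pow_pos n
      lia
    have hpp (i : ℕ) (hi : i < k) (j : ℕ) (hj : j < k) (hij : i ≠ j) (p : ℕ) (hp : p ≠ 0) (q : ℕ)
        (hq : q ≠ 0) : c i ^ p * c j ^ q = 0 := by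
      obtain ⟨p, rfl⟩ := Nat.exists_eq_succ_of_ne_zero hp
      obtain ⟨q, rfl⟩ := Nat.exists_eq_succ_of_ne_zero hq
      rw [pow_succ, pow_succ', mul_assoc, ← mul_assoc (c i), hcc i hi j hj hij, zero_mul, mul_zero]
    have hπh : π h = c n ^ N - ∑ j ∈ Finset.Ico (n + 1) k, c j ^ N := by
      rw [hh, map_mul, map_mul, hπL, mul_sub, sub_mul, hRcR n (by lia) le_rfl, Finset.mul_sum,
        Finset.sum_mul]
      congr 1
      refine Finset.sum_congr rfl fun j hj ↦ ?_
      rw [Finset.mem_Ico] at hj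
      exact hRcR j hj.2 (by lia)
    have hparts := CFC.posPart_negPart_unique hπh
      (by
        rw [Finset.mul_sum]
        refine Finset.sum_eq_zero fun j hj ↦ ?_
        rw [Finset.mem_Ico] at hj
        exact hpp n (by lia) j hj.2 (by lia) _ hN1 _ hN1)
      (hpow n N) (Finset.sum_nonneg fun j _ ↦ hpow j N)
    have hlift := π.apply_posPart hsa
    have hpsa : star h⁺ = h⁺ := (IsSelfAdjoint.of_nonneg (CFC.posPart_nonneg h)).star_eq
    have hz (i : ℕ) (hi : i < n) := mul_posPart_eq_zero (x := star (a i)) hsa (by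
      rw [hh, ← mul_assoc, ← mul_assoc, haR i hi, zero_mul, zero_mul])
    have hz' (i : ℕ) (hi : i < n) : h⁺ * a i = 0 := by
      simpa [hpsa] using congrArg star (hz i hi).1
    refine ⟨Function.update a n h⁺, h⁻, .of_nonneg (CFC.negPart_nonneg h), ?_, ?_, ?_, ?_⟩
    · intro i hi
      obtain rfl | hin := eq_or_ne i n
      · rw [Function.update_self, hlift.1, hparts.1]
      · rw [Function.update_of_ne hin, ha i (by lia)]
    · intro i hi j hj hij
      obtain rfl | hin := eq_or_ne i n
      · rw [Function.update_self, Function.update_of_ne hij.symm, hpsa, hz' j (by lia)]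
      · obtain rfl | hjn := eq_or_ne j n
        · rw [Function.update_self, Function.update_of_ne hij, (hz i (by lia)).1]
        · rw [Function.update_of_ne hin, Function.update_of_ne hjn,
            hao i (by lia) j (by lia) hij]
    · intro i hi
      obtain rfl | hin := eq_or_ne i n
      · rw [Function.update_self, hpsa, CFC.posPart_mul_negPart]
      · rw [Function.update_of_ne hin, (hz i (by lia)).2]
    · intro j hj hnj
      rw [hlift.2, hparts.2, Finset.sum_mul, Finset.sum_eq_single j, ← pow_succ, hN0]
      · intro i hi hij
        rw [Finset.mem_Ico] at hi
        simpa using hpp i hi.2 j hj hij N hN1 1 one_ne_zero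
      · intro hj'
        exact absurd (Finset.mem_Ico.mpr ⟨hnj, hj⟩) hj'

/-- Powers of pairwise orthogonal positive elements lift to elements with orthogonal ranges. -/
theorem StarAlgHom.exists_orthogonal_lift (π : A →⋆ₐ[ℂ] B) (hπ : Function.Surjective π)
    {c : ℕ → B} (hc : ∀ i, 0 ≤ c i) {k : ℕ}
    (hcc : ∀ i < k, ∀ j < k, i ≠ j → c i * c j = 0) :
    ∃ a : ℕ → A, (∀ i < k, π (a i) = c i ^ 2 ^ k) ∧
      ∀ i < k, ∀ j < k, i ≠ j → star (a i) * a j = 0 := by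
  obtain ⟨a, R, -, ha, hao, -⟩ := π.exists_orthogonal_lift_aux hπ hc hcc k le_rfl
  choose l hl using fun i ↦ hπ (c i ^ (2 ^ k - (2 ^ (i + 1) - 1)))
  refine ⟨fun i ↦ a i * l i, fun i hi ↦ ?_, fun i hi j hj hij ↦ ?_⟩
  · have : 2 ^ (i + 1) ≤ 2 ^ k := Nat.pow_le_pow_right two_pos hi
    rw [map_mul, ha i hi, hl, ← pow_add]
    congr 1
    lia
  · rw [star_mul, mul_assoc, ← mul_assoc _ (a j), hao i hi j hj hij, zero_mul, mul_zero]

/-- Lift `zⱼ`, up to powers of `ρ = zⱼ* zⱼ`, to elements with orthogonal ranges, each a left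
multiple of the preceding one. -/
theorem StarAlgHom.exists_chain_lift (π : A →⋆ₐ[ℂ] B) (hπ : Function.Surjective π)
    {z : ℕ → B} {ρ : B} (hz : ∀ j, star (z j) * z j = ρ) {k : ℕ}
    (horth : ∀ i < k, ∀ j < k, i ≠ j → z i * star (z i) * (z j * star (z j)) = 0) :
    ∃ P : ℕ → A, (∀ j < k, π (P j) = z j * ρ ^ (2 ^ k + j * (2 ^ k + 1))) ∧
      (∀ i < k, ∀ j < k, i ≠ j → star (P i) * P j = 0) ∧
      ∀ j, ∃ y, P (j + 1) = y * P j := by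
  obtain ⟨α, hα, hαo⟩ := π.exists_orthogonal_lift hπ (fun j ↦ mul_star_self_nonneg (z j)) horth
  obtain ⟨t, ht⟩ := hπ (z 0)
  choose T hT using fun j ↦ hπ (z (j + 1) * star (z j))
  set P : ℕ → A := fun j ↦ Nat.rec (α 0 * t) (fun j p ↦ α (j + 1) * T j * p) j with hP
  have hP0 : P 0 = α 0 * t := rfl
  have hPs (j : ℕ) : P (j + 1) = α (j + 1) * T j * P j := rfl
  have hPα (j : ℕ) : ∃ y, P j = α j * y := by
    cases j with
    | zero => exact ⟨t, rfl⟩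
    | succ j => exact ⟨T j * P j, by rw [hPs, mul_assoc]⟩
  refine ⟨P, fun j hj ↦ ?_, fun i hi j hj hij ↦ ?_, fun j ↦ ⟨_, hPs j⟩⟩
  · induction j with
    | zero => rw [hP0, map_mul, hα 0 hj, ht, mul_star_self_pow_mul, hz]; simp
    | succ j ih =>
      rw [hPs, map_mul, map_mul, hα _ hj, hT, ih (by lia), ← mul_assoc,
        ← mul_assoc ((z (j + 1) * star (z (j + 1))) ^ 2 ^ k), mul_star_self_pow_mul, hz, mul_assoc,
        mul_assoc _ (star (z j)), ← mul_assoc (star (z j)), hz, ← pow_succ', mul_assoc, ← pow_add]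
      congr 2
      ring
  · obtain ⟨y, hy⟩ := hPα i
    obtain ⟨y', hy'⟩ := hPα j
    rw [hy, hy', star_mul, mul_assoc, ← mul_assoc _ (α j), hαo i hi j hj hij, zero_mul, mul_zero]

theorem star_mul_self_le_smul (y p : A) :
    star (y * p) * (y * p) ≤ (‖y‖ ^ 2) • (star p * p) := by
  have h := star_left_conjugate_le_conjugate
    (CStarAlgebra.star_mul_le_algebraMap_norm_sq (a := y)) p
  rw [← Algebra.commutes, mul_assoc (algebraMap ℝ A _), ← Algebra.smul_def] at h
  rw [star_mul]
  simpa only [mul_assoc] using h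

theorem exists_mul_star_le_smul_abs (y p : A) :
    ∃ C : ℝ, star (y * p) * (y * p) * star (star (y * p) * (y * p)) ≤ C • CFC.abs p := by
  set h := star (y * p) * (y * p) with hh
  refine ⟨‖h‖ * (‖y‖ ^ 2 * ‖CFC.abs p‖), ?_⟩
  have h0 : 0 ≤ h := star_mul_self_nonneg _
  rw [(IsSelfAdjoint.of_nonneg h0).star_eq, mul_smul, mul_smul]
  refine (mul_self_le_norm_smul h0).trans (smul_le_smul_of_nonneg_left ?_ (norm_nonneg h))
  refine (star_mul_self_le_smul y p).trans (smul_le_smul_of_nonneg_left ?_ (by positivity))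
  rw [← CFC.abs_mul_abs]
  exact mul_self_le_norm_smul (CFC.abs_nonneg p)

/-- Lift equivalent orthogonal contractions `xⱼ xⱼ*` to squares of `Wⱼ Wⱼ*`, where the `Wⱼ` have
orthogonal ranges and a common contraction `Wⱼ* Wⱼ`. -/
theorem StarAlgHom.exists_lift_partial_isometries (π : A →⋆ₐ[ℂ] B) (hπ : Function.Surjective π)
    {x : ℕ → B} {b : B} (hb : ‖b‖ ≤ 1) (hx : ∀ j, star (x j) * x j = b) {k : ℕ} (hk : 0 < k)
    (horth : ∀ i < k, ∀ j < k, i ≠ j → x i * star (x i) * (x j * star (x j)) = 0) :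
    ∃ (W : ℕ → A) (E : A), ‖E‖ ≤ 1 ∧ (∀ j < k, star (W j) * W j = E) ∧
      (∀ i < k, ∀ j < k, i ≠ j → star (W i) * W j = 0) ∧
      ∀ j < k, π ((W j * star (W j)) ^ 2) = x j * star (x j) := by
  obtain ⟨K, rfl⟩ : ∃ K, k = K + 1 := ⟨k - 1, by lia⟩
  set m : ℕ → ℕ := fun j ↦ 2 ^ (K + 1) + j * (2 ^ (K + 1) + 1) with hm
  have hmK (j : ℕ) (hj : j < K + 1) : m j ≤ m K :=
    Nat.add_le_add_left (Nat.mul_le_mul_right _ (by lia)) _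
  set n := 4 * m K + 2 with hn
  have hb0 : 0 ≤ b := hx 0 ▸ star_mul_self_nonneg _
  obtain ⟨ρ, z, hρ, hρb, hz, hzx⟩ := exists_root_partial_isometries hb0 hx (n + 1)
  have hzo (i : ℕ) (hi : i < K + 1) (j : ℕ) (hj : j < K + 1) (hij : i ≠ j) :
      z i * star (z i) * (z j * star (z j)) = 0 :=
    mul_eq_zero_of_pow_two_pow_mul (.mul_star_self _) (.mul_star_self _) (n + 1)
      (by rw [hzx, hzx, horth i hi j hj hij])
  obtain ⟨P, hPπ, hPo, hPc⟩ := π.exists_chain_lift hπ hz hzo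
  set r := CFC.sqrt ρ
  have hr : 0 ≤ r := CFC.sqrt_nonneg ρ
  have hrρ : ρ = r ^ 2 := by rw [sq]; exact (CFC.sqrt_mul_sqrt_self ρ).symm
  have hρsa : star ρ = ρ := (IsSelfAdjoint.of_nonneg hρ).star_eq
  set c := star (P K) * P K with hc
  have hcle (j : ℕ) (hj : j < K + 1) : ∃ C : ℝ, c * star c ≤ C • CFC.abs (P j) := by
    obtain ⟨y, hy⟩ := exists_eq_mul_of_chain hPc (Nat.lt_succ_iff.mp hj)
    rw [hc, hy]
    exact exists_mul_star_le_smul_abs y (P j)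
  have hπPP (j : ℕ) (hj : j < K + 1) : π (star (P j) * P j) = ρ ^ (2 * m j + 1) := by
    rw [map_mul, map_star, hPπ j hj, star_mul, star_pow, hρsa, mul_assoc,
      ← mul_assoc (star (z j)), hz, ← pow_succ', ← pow_add]
    congr 1
    ring
  have hπs (j : ℕ) (hj : j < K + 1) : π (CFC.abs (P j)) = r ^ (2 * m j + 1) := by
    rw [← CFC.mul_self_eq_mul_self_iff _ _ (π.apply_nonneg (CFC.abs_nonneg _))
      (CStarAlgebra.pow_nonneg hr _), ← map_mul, CFC.abs_mul_abs, hπPP j hj, hrρ, ← pow_mul,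
      ← pow_add]
    congr 1
    ring
  have hw (j : ℕ) : ∃ w, j < K + 1 →
      Tendsto (fun n ↦ P j * regInv (CFC.abs (P j)) n * c) atTop (𝓝 w) ∧
        star w * w = star c * c := by
    by_cases hj : j < K + 1
    · obtain ⟨C, hC⟩ := hcle j hj
      obtain ⟨w, hw⟩ := exists_tendsto_mul_regInv_mul (CFC.abs_nonneg (P j))
        (CFC.abs_mul_abs (P j)).symm hC
      exact ⟨w, fun _ ↦ hw⟩
    · exact ⟨0, fun h ↦ absurd h hj⟩
  choose w hw using hw
  have hπw (j : ℕ) (hj : j < K + 1) : π (w j) = z j * r ^ (4 * m K + 1) := by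
    have h1 := ((map_continuous π).tendsto _).comp (hw j hj).1
    have h2 := tendsto_mul_regInv_mul_of_commute (P := π (P j)) (c := π c)
      (y := z j * ρ ^ (m K + (m K - m j))) (π.apply_nonneg (CFC.abs_nonneg (P j)))
      (by
        rw [hπs j hj, hc, hπPP K (by lia), hrρ, ← pow_mul]
        exact (Commute.refl r).pow_pow _ _)
      (by
        rw [hπs j hj, hc, hπPP K (by lia), hPπ j hj, hrρ]
        simp only [mul_assoc, ← pow_mul, ← pow_add]
        congr 2
        have := hmK j hj
        change 2 * m j + 2 * (2 * m K + 1) = _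
        lia)
    have h3 := tendsto_nhds_unique h1 (h2.congr fun n ↦ by
      rw [Function.comp_apply, map_mul π _ c, map_mul π (P j),
        π.apply_regInv (.of_nonneg (CFC.abs_nonneg (P j)))])
    rw [h3, hπs j hj, hrρ]
    simp only [mul_assoc, ← pow_mul, ← pow_add]
    congr 2
    have := hmK j hj
    lia
  have hwo (i : ℕ) (hi : i < K + 1) (j : ℕ) (hj : j < K + 1) (hij : i ≠ j) :
      star (w i) * w j = 0 := by
    refine tendsto_nhds_unique ((hw i hi).1.star.mul (hw j hj).1)
      (tendsto_const_nhds.congr fun n ↦ ?_)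
    rw [star_mul, star_mul (P i), mul_assoc (P j), mul_assoc (star c), mul_assoc _ (star (P i)),
      ← mul_assoc (star (P i)), hPo i hi j hj hij, zero_mul, mul_zero, mul_zero]
  have hn2 : n ≤ 2 ^ n := Nat.lt_two_pow_self.le
  obtain ⟨q, hq⟩ := hπ (r ^ (2 ^ n - n))
  have hπwq (j : ℕ) (hj : j < K + 1) : π (w j * q) = z j * r ^ (2 ^ n - 1) := by
    rw [map_mul, hπw j hj, hq, mul_assoc, ← pow_add]
    congr 2
    lia
  have hrsa : star r = r := (IsSelfAdjoint.of_nonneg hr).star_eq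
  have h2n := Nat.two_pow_pos n
  set F := star q * (star c * c) * q with hF
  have hwqF (j : ℕ) (hj : j < K + 1) : star (w j * q) * (w j * q) = F := by
    rw [hF, ← (hw j hj).2, star_mul]
    simp only [mul_assoc]
  have hπF : π F = ρ ^ 2 ^ n := by
    rw [← hwqF 0 hk, map_mul, map_star, hπwq 0 hk, star_mul, star_pow, hrsa, mul_assoc,
      ← mul_assoc (star (z 0)), hz, hrρ, ← pow_add, ← pow_add, ← pow_mul]
    congr 1
    lia
  have hF0 : 0 ≤ F := hwqF 0 hk ▸ star_mul_self_nonneg _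
  have hFn : ‖π F‖ ≤ 1 := by
    have h1 : ‖π F‖ * ‖π F‖ = ‖b‖ := by
      rw [← CStarRing.norm_star_mul_self, hπF, star_pow, hρsa, ← pow_add, ← hρb]
      congr 2
      ring
    nlinarith [norm_nonneg (π F)]
  obtain ⟨d, hd, hπd, hdF⟩ := π.exists_truncation hF0 hFn
  refine ⟨fun j ↦ w j * q * d, d * F * d, hdF, fun j hj ↦ ?_, fun i hi j hj hij ↦ ?_,
    fun j hj ↦ ?_⟩
  · rw [← hwqF j hj, star_mul _ d, hd.star_eq]
    simp only [mul_assoc]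
  · simp only [star_mul, mul_assoc]
    rw [← mul_assoc (star (w i)), hwo i hi j hj hij, zero_mul, mul_zero, mul_zero]
  · rw [← hzx, map_pow, map_mul, map_star, map_mul π _ d, hπd, mul_one, hπwq j hj, star_mul,
      star_pow, hrsa, pow_succ 2 n, pow_mul]
    congr 1
    obtain ⟨N, hN⟩ : ∃ N, 2 ^ n = N + 1 := ⟨2 ^ n - 1, by lia⟩
    rw [hN, ← mul_pow_mul_star, hz, hrρ, ← pow_mul, Nat.add_sub_cancel, two_mul, pow_add]
    simp only [mul_assoc]

end CStar

/-- Let `π : A → B` be a surjective unital star-algebra homomorphism of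
unital C*-algebras, let `k ≥ 2`, and let `b₀, b₁, …, b_k` be positive contractions in `B`
such that `b₁, …, b_k` are pairwise orthogonal and pairwise equivalent,
`b₀ + b₁ + ⋯ + b_k = 1`, and `b₀ = t (b₁ - 1/2)₊ t*` for some `t ∈ B`.  Then there exist
positive contractions `a₀, a₁, …, a_k` in `A` with `a₁, …, a_k` pairwise orthogonal and
pairwise equivalent, `a₀ ≾ (a₁ - 1/2)₊`, and `π aⱼ = bⱼ` for all `j`. -/
theorem lift_orthogonal_equivalent_contractions {A B : Type*} [CStarAlgebra A]
    [CStarAlgebra B] [PartialOrder A] [StarOrderedRing A] [PartialOrder B]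
    [StarOrderedRing B] (π : A →⋆ₐ[ℂ] B) (hsurj : Function.Surjective π)
    (k : ℕ) (hk : 2 ≤ k) (b : Fin (k + 1) → B)
    (hpos : ∀ i, 0 ≤ b i) (hcontr : ∀ i, ‖b i‖ ≤ 1)
    (horth : ∀ i j : Fin (k + 1), i ≠ j → i ≠ 0 → j ≠ 0 → b i * b j = 0)
    (hequiv : ∀ i j : Fin (k + 1), i ≠ 0 → j ≠ 0 →
      ∃ x : B, b i = star x * x ∧ b j = x * star x)
    (hsum : ∑ i, b i = 1)
    (ht : ∃ t : B, b 0 = t * cfc (fun s : ℝ => max (s - 1 / 2) 0) (b 1) * star t) :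
    ∃ a : Fin (k + 1) → A,
      (∀ i, 0 ≤ a i) ∧ (∀ i, ‖a i‖ ≤ 1) ∧
      (∀ i j : Fin (k + 1), i ≠ j → i ≠ 0 → j ≠ 0 → a i * a j = 0) ∧
      (∀ i j : Fin (k + 1), i ≠ 0 → j ≠ 0 →
        ∃ x : A, a i = star x * x ∧ a j = x * star x) ∧
      CuntzSub (a 0) (cfc (fun s : ℝ => max (s - 1 / 2) 0) (a 1)) ∧
      (∀ i, π (a i) = b i) := by
  obtain ⟨t, ht⟩ := ht
  have h1 : (1 : Fin (k + 1)) = ⟨1, by lia⟩ := by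
    ext
    simp [Nat.mod_eq_of_lt (show 1 < k + 1 by lia)]
  have h10 : (1 : Fin (k + 1)) ≠ 0 := by
    rw [h1, Ne, Fin.ext_iff]
    simp
  have hx (j : ℕ) : ∃ x : B, star x * x = b 1 ∧
      ∀ h : j < k, x * star x = b (Fin.succ ⟨j, h⟩) := by
    by_cases hj : j < k
    · obtain ⟨x, hx, hx'⟩ := hequiv 1 (Fin.succ ⟨j, hj⟩) h10 (Fin.succ_ne_zero _)
      exact ⟨x, hx.symm, fun _ ↦ hx'.symm⟩
    · obtain ⟨x, hx, -⟩ := hequiv 1 1 h10 h10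
      exact ⟨x, hx.symm, fun h ↦ absurd h hj⟩
  choose x hxb hxx using hx
  obtain ⟨W, E, hE, hWE, hWo, hWπ⟩ := π.exists_lift_partial_isometries hsurj (hcontr 1) hxb
    (show 0 < k by lia) (fun i hi j hj hij ↦ by
      rw [hxx i hi, hxx j hj]
      exact horth _ _ (by simpa using hij) (Fin.succ_ne_zero _) (Fin.succ_ne_zero _))
  set a' : ℕ → A := fun j ↦ (W j * star (W j)) ^ 2 with ha'
  have hWsa (j : ℕ) : IsSelfAdjoint (W j * star (W j)) := .mul_star_self _
  have ha'0 (j : ℕ) : 0 ≤ a' j := CStarAlgebra.pow_nonneg (mul_star_self_nonneg _) 2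
  have ha'1 (j : ℕ) (hj : j < k) : ‖a' j‖ ≤ 1 := by
    have h : ‖W j‖ * ‖W j‖ ≤ 1 := by rwa [← CStarRing.norm_star_mul_self, hWE j hj]
    rw [ha']
    simp only [sq]
    refine (norm_mul_le _ _).trans ?_
    rw [CStarRing.norm_self_mul_star]
    exact mul_le_one₀ h (by positivity) h
  set g : ℝ → ℝ := fun s ↦ max (s - 1 / 2) 0
  have hg : Continuous g := by fun_prop
  set p := cfc g (a' 0)
  have hp : 0 ≤ p := cfc_nonneg fun s _ ↦ le_max_right _ _
  have hπ0 : π (a' 0) = b 1 := by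
    rw [ha', hWπ 0 (by lia), hxx 0 (by lia), h1]
    rfl
  have hπp : π p = cfc g (b 1) := by
    rw [π.apply_cfc_real hg (.of_nonneg (ha'0 0)), hπ0]
  obtain ⟨T, hT⟩ := hsurj t
  have hTp : π (T * p * star T) = b 0 := by rw [map_mul, map_mul, map_star, hT, hπp, ht]
  obtain ⟨d, hd, hπd, hdn⟩ := π.exists_truncation (star_right_conjugate_nonneg hp T)
    (by rw [hTp]; exact hcontr 0)
  set a : Fin (k + 1) → A := Fin.cons (d * (T * p * star T) * d) (fun j ↦ a' j) with ha
  have has (j : Fin k) : a j.succ = a' j := by rw [ha, Fin.cons_succ]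
  have ha0 : a 0 = d * (T * p * star T) * d := by rw [ha, Fin.cons_zero]
  have ha1 : a 1 = a' 0 := by
    rw [h1]
    exact has ⟨0, by lia⟩
  refine ⟨a, fun i ↦ ?_, fun i ↦ ?_, fun i j hij hi hj ↦ ?_, fun i j hi hj ↦ ?_, ?_, fun i ↦ ?_⟩
  · cases i using Fin.cases with
    | zero =>
      rw [ha0]
      exact hd.conjugate_nonneg (star_right_conjugate_nonneg hp T)
    | succ j => rw [has]; exact ha'0 j
  · cases i using Fin.cases with
    | zero => rw [ha0]; exact hdn
    | succ j => rw [has]; exact ha'1 j j.2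
  · obtain ⟨i, rfl⟩ := Fin.exists_succ_eq.mpr hi
    obtain ⟨j, rfl⟩ := Fin.exists_succ_eq.mpr hj
    have h := hWo i i.2 j j.2 (by simpa [Fin.ext_iff] using hij)
    rw [has, has, ha']
    simp only [sq, mul_assoc]
    rw [← mul_assoc (star (W i)) (W j), h, zero_mul, mul_zero, mul_zero, mul_zero]
  · obtain ⟨i, rfl⟩ := Fin.exists_succ_eq.mpr hi
    obtain ⟨j, rfl⟩ := Fin.exists_succ_eq.mpr hj
    have key (i j : Fin k) : a' i = W i * (star (W j) * W j) * star (W i) := by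
      rw [hWE j j.2, ← hWE i i.2, ha']
      simp only [sq, mul_assoc]
    refine ⟨W j * star (W i), ?_, ?_⟩
    · rw [has, key i j, star_mul, star_star]
      simp only [mul_assoc]
    · rw [has, key j i, star_mul, star_star]
      simp only [mul_assoc]
  · intro ε hε
    refine ⟨star T * d, ?_⟩
    rw [ha0, ha1, star_mul, star_star, hd.star_eq]
    change ‖d * T * p * (star T * d) - _‖ < ε
    simpa [mul_assoc] using hε
  · cases i using Fin.cases with
    | zero => rw [ha0, map_mul, map_mul, hπd, one_mul, mul_one, hTp]
    | succ j => rw [has, ha', hWπ j j.2, hxx j j.2]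
end
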